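/- Let sequences (z^k, λ^k) for k = 0, 1, 2, … be generated by iterating the Consensus ALADIN step with constant matrices, where each f_i is differentiable and m-strongly convex with m > 0, (z*, λ*) is a KKT point, and Σ_i λ_i^0 = 0. Suppose δ > 0 is such that for every k, δ · L(z^{k+1}, λ^{k+1}) ≤ 4m Σ_{i=1}^N ‖x_i^{k+1} − z*‖², where x_i^{k+1} are the local minimizers produced in the step from (z^k, λ^k). Then for all k, Σ_{i=1}^N ‖z^k − z*‖²_{B_i} ≤ L(z^k, λ^k) ≤ (1/(1+δ))^k · L(z^0, λ^0); in particular z^k converges to z* at a linear rate. -/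

import Mathlib

open Matrix Finset

/-!
Fix an agent and write `a = z - z*`, `ℓ = λ - λ*`, `d = x⁺ - z*`, `e = g + λ*`, where `g` is a
subgradient of `f` at `x⁺` by optimality of `x⁺`, and `-λ*` is one at `z*`. The update is a
reflection: it reads `B a - ℓ = B d + e` and `B a⁺ + ℓ⁺ = B d - e`. Taking `‖·‖²_{B⁻¹}` of both
sides and summing over the agents, the cross terms `⟨a, ℓ⟩` and `⟨a⁺, ℓ⁺⟩` vanish because the dual
variables sum to zero, and what remains is the exact energy balance
`L(z⁺, λ⁺) + 4 ∑ ⟨d, e⟩ = L(z, λ)`. Strong monotonicity of the subgradients gives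
`⟨d, e⟩ ≥ m ‖d‖²`.
-/

section QuadraticForm

variable {κ R : Type*} [Fintype κ] [CommRing R] {M : Matrix κ κ R}

lemma dotProduct_mulVec_comm_of_isSymm (hM : M.IsSymm) (u v : κ → R) :
    u ⬝ᵥ M *ᵥ v = v ⬝ᵥ M *ᵥ u := by
  rw [← dotProduct_transpose_mulVec, hM.eq]

lemma dotProduct_mulVec_add_smul_self (hM : M.IsSymm) (u v : κ → R) (t : R) :
    (u + t • v) ⬝ᵥ M *ᵥ (u + t • v) =
      u ⬝ᵥ M *ᵥ u + 2 * t * (v ⬝ᵥ M *ᵥ u) + t ^ 2 * (v ⬝ᵥ M *ᵥ v) := by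
  simp only [mulVec_add, mulVec_smul, add_dotProduct, dotProduct_add, smul_dotProduct,
    dotProduct_smul, smul_eq_mul, dotProduct_mulVec_comm_of_isSymm hM u v]
  ring

variable [DecidableEq κ]

lemma dotProduct_inv_mulVec_mulVec_add_self (hM : M.IsSymm) (hMu : IsUnit M) (u v : κ → R) :
    (M *ᵥ u + v) ⬝ᵥ M⁻¹ *ᵥ (M *ᵥ u + v) = v ⬝ᵥ M⁻¹ *ᵥ v + u ⬝ᵥ M *ᵥ u + 2 * (u ⬝ᵥ v) := by
  have hinv : M⁻¹ *ᵥ M *ᵥ u = u := by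
    rw [mulVec_mulVec, nonsing_inv_mul _ ((isUnit_iff_isUnit_det M).1 hMu), one_mulVec]
  have hcross : M *ᵥ u ⬝ᵥ M⁻¹ *ᵥ v = u ⬝ᵥ v := by
    rw [dotProduct_mulVec_comm_of_isSymm hM.inv, hinv, dotProduct_comm]
  rw [mulVec_add, hinv, add_dotProduct, dotProduct_add, dotProduct_add, hcross,
    dotProduct_comm (M *ᵥ u), dotProduct_comm v u]
  ring

lemma dotProduct_inv_mulVec_mulVec_sub_self (hM : M.IsSymm) (hMu : IsUnit M) (u v : κ → R) :
    (M *ᵥ u - v) ⬝ᵥ M⁻¹ *ᵥ (M *ᵥ u - v) = v ⬝ᵥ M⁻¹ *ᵥ v + u ⬝ᵥ M *ᵥ u - 2 * (u ⬝ᵥ v) := by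
  simpa only [mulVec_neg, dotProduct_neg, neg_dotProduct, neg_neg, ← sub_eq_add_neg, mul_neg]
    using dotProduct_inv_mulVec_mulVec_add_self hM hMu u (-v)

end QuadraticForm

section Convergence

open Filter Topology

variable {κ α : Type*} [Fintype κ] {l : Filter α} {v : α → κ → ℝ}

lemma tendsto_zero_of_tendsto_dotProduct_self
    (hv : Tendsto (fun a => v a ⬝ᵥ v a) l (𝓝 0)) : Tendsto v l (𝓝 0) := by
  refine tendsto_pi_nhds.2 fun j => ?_
  have hsq : Tendsto (fun a => v a j ^ 2) l (𝓝 0) :=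
    squeeze_zero (fun a => sq_nonneg _) (fun a => by
      simpa only [sq, dotProduct] using single_le_sum (f := fun i => v a i * v a i)
        (fun i _ => mul_self_nonneg _) (mem_univ j)) hv
  refine (tendsto_zero_iff_abs_tendsto_zero _).2 ?_
  simpa only [Function.comp_def, Real.sqrt_sq_eq_abs, Real.sqrt_zero] using hsq.sqrt

lemma tendsto_zero_of_tendsto_dotProduct_mulVec {M : Matrix κ κ ℝ} (hM : M.PosDef)
    (hv : Tendsto (fun a => v a ⬝ᵥ M *ᵥ v a) l (𝓝 0)) : Tendsto v l (𝓝 0) := by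
  classical
  open scoped MatrixOrder in
  obtain ⟨S, hS⟩ := CStarAlgebra.nonneg_iff_eq_star_mul_self.mp hM.posSemidef.nonneg
  have hMS : M = Sᵀ * S := by rw [hS, star_eq_conjTranspose, conjTranspose_eq_transpose_of_trivial]
  have hSu : IsUnit S.det := by
    refine isUnit_of_mul_isUnit_right (x := Sᵀ.det) ?_
    rw [← det_mul, ← hMS]
    exact (isUnit_iff_isUnit_det M).1 hM.isUnit
  have hSv : Tendsto (fun a => S *ᵥ v a) l (𝓝 0) := by
    refine tendsto_zero_of_tendsto_dotProduct_self (hv.congr fun a => ?_)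
    rw [hMS, ← mulVec_mulVec, dotProduct_transpose_mulVec]
  have hcont : Continuous fun w : κ → ℝ => S⁻¹ *ᵥ w := by fun_prop
  simpa only [Function.comp_def, mulVec_mulVec, nonsing_inv_mul _ hSu, one_mulVec, mulVec_zero]
    using (hcont.tendsto 0).comp hSv

end Convergence

section StrongSubgradient

variable {κ : Type*} [Fintype κ] {m : ℝ} {f : (κ → ℝ) → ℝ} {p q x y : κ → ℝ}

/-- `p` is an `m`-strong subgradient of `f` at `x`. A real-valued `f` is `m`-strongly convex exactly
when it has an `m`-strong subgradient at every point; for differentiable `f` this is `∇f x`. The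
Euclidean norm is written as a dot product, because the norm on `κ → ℝ` is the sup norm. -/
def IsStrongSubgradientAt (m : ℝ) (f : (κ → ℝ) → ℝ) (p x : κ → ℝ) : Prop :=
  ∀ y, f x + p ⬝ᵥ (y - x) + m / 2 * ((y - x) ⬝ᵥ (y - x)) ≤ f y

namespace IsStrongSubgradientAt

lemma mul_dotProduct_self_le (hp : IsStrongSubgradientAt m f p x)
    (hq : IsStrongSubgradientAt m f q y) :
    m * ((x - y) ⬝ᵥ (x - y)) ≤ (x - y) ⬝ᵥ (p - q) := by
  have hxy := hp y
  have hyx := hq x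
  rw [← neg_sub x y, dotProduct_neg, neg_dotProduct_neg] at hxy
  rw [dotProduct_comm (x - y) (p - q), sub_dotProduct p q]
  linarith

lemma apply_add_smul_le {d : κ → ℝ} {t : ℝ} (hp : IsStrongSubgradientAt m f p (x + t • d))
    (ht₀ : 0 ≤ t) (ht₁ : t ≤ 1) :
    f (x + t • d) + m / 2 * (t * (1 - t) * (d ⬝ᵥ d)) ≤ (1 - t) * f x + t * f (x + d) := by
  have hleft := hp x
  have hright := hp (x + d)
  rw [show x - (x + t • d) = (-t) • d by module] at hleft
  rw [show x + d - (x + t • d) = (1 - t) • d by module] at hright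
  simp only [dotProduct_smul, smul_dotProduct, smul_eq_mul] at hleft hright
  linear_combination (1 - t) * hleft + t * hright

end IsStrongSubgradientAt

-- Nonsmooth Fermat rule: compare `x` with `x + t • d`, divide by `t` and let `t` tend to `0`.
lemma isStrongSubgradientAt_of_forall_prox_le {M : Matrix κ κ ℝ} {l z : κ → ℝ}
    (hf : ∀ w, ∃ p, IsStrongSubgradientAt m f p w) (hM : M.IsSymm)
    (hx : ∀ w, f x + l ⬝ᵥ x + (1 / 2 : ℝ) * ((x - z) ⬝ᵥ M *ᵥ (x - z)) ≤
      f w + l ⬝ᵥ w + (1 / 2 : ℝ) * ((w - z) ⬝ᵥ M *ᵥ (w - z))) :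
    IsStrongSubgradientAt m f (M *ᵥ (z - x) - l) x := by
  intro y
  obtain ⟨d, rfl⟩ : ∃ d, y = x + d := ⟨y - x, by abel⟩
  rw [add_sub_cancel_left]
  have hsegment : ∀ t ∈ Set.Ioo (0 : ℝ) 1, f x + (M *ᵥ (z - x) - l) ⬝ᵥ d
      + m / 2 * ((1 - t) * (d ⬝ᵥ d)) ≤ f (x + d) + t / 2 * (d ⬝ᵥ M *ᵥ d) := by
    rintro t ⟨ht₀, ht₁⟩
    obtain ⟨p, hp⟩ := hf (x + t • d)
    have hconvex := hp.apply_add_smul_le ht₀.le ht₁.le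
    have hmin := hx (x + t • d)
    rw [add_sub_right_comm, dotProduct_mulVec_add_smul_self hM, dotProduct_add, dotProduct_smul,
      smul_eq_mul] at hmin
    rw [← neg_sub x z, mulVec_neg, dotProduct_comm _ d, dotProduct_sub, dotProduct_neg,
      dotProduct_comm d l]
    refine le_of_mul_le_mul_left ?_ ht₀
    linear_combination hmin + hconvex
  have hleft : Continuous fun t : ℝ =>
      f x + (M *ᵥ (z - x) - l) ⬝ᵥ d + m / 2 * ((1 - t) * (d ⬝ᵥ d)) := by fun_prop
  have hright : Continuous fun t : ℝ => f (x + d) + t / 2 * (d ⬝ᵥ M *ᵥ d) := by fun_prop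
  have hzero : (0 : ℝ) ∈ closure (Set.Ioo 0 1) := by
    rw [closure_Ioo zero_ne_one]
    exact Set.left_mem_Icc.2 zero_le_one
  simpa using le_on_closure hsegment hleft.continuousOn hright.continuousOn hzero

end StrongSubgradient

section Aladin

variable {ι κ : Type*} [Fintype ι] [Fintype κ] [DecidableEq κ] {B : ι → Matrix κ κ ℝ}
  {z z' zstar : κ → ℝ} {lam lam' lamstar x g : ι → κ → ℝ}

/-- The energy `L(z, λ) = ∑ᵢ (‖λᵢ - λᵢ*‖²_{Bᵢ⁻¹} + ‖z - z*‖²_{Bᵢ})`, the Lyapunov function of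
Consensus ALADIN. -/
noncomputable def aladinEnergy (B : ι → Matrix κ κ ℝ) (zstar : κ → ℝ) (lamstar : ι → κ → ℝ)
    (z : κ → ℝ) (lam : ι → κ → ℝ) : ℝ :=
  ∑ i, ((lam i - lamstar i) ⬝ᵥ (B i)⁻¹ *ᵥ (lam i - lamstar i)
    + (z - zstar) ⬝ᵥ B i *ᵥ (z - zstar))

lemma sum_dotProduct_mulVec_le_aladinEnergy (hB : ∀ i, (B i).PosSemidef) :
    ∑ i, (z - zstar) ⬝ᵥ B i *ᵥ (z - zstar) ≤ aladinEnergy B zstar lamstar z lam :=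
  sum_le_sum fun i _ => le_add_of_nonneg_left <| by
    simpa only [star_trivial] using (hB i).inv.dotProduct_mulVec_nonneg (lam i - lamstar i)

/-- The gradient recovery, consensus and dual updates of one Consensus ALADIN iteration, taking
`(z, λ)` to `(z', λ')` once the local solutions `xᵢ` are known. How the `xᵢ` arise from the local
subproblems is not part of this predicate. -/
structure IsAladinUpdate (B : ι → Matrix κ κ ℝ) (z : κ → ℝ) (lam x g : ι → κ → ℝ) (z' : κ → ℝ)
    (lam' : ι → κ → ℝ) : Prop where
  grad_eq : ∀ i, g i = B i *ᵥ (z - x i) - lam i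
  primal_eq : z' = (∑ i, B i)⁻¹ *ᵥ ∑ i, (B i *ᵥ x i - g i)
  dual_eq : ∀ i, lam' i = B i *ᵥ (x i - z') - g i

namespace IsAladinUpdate

lemma sum_dual_eq_zero (h : IsAladinUpdate B z lam x g z' lam') (hB : IsUnit (∑ i, B i)) :
    ∑ i, lam' i = 0 := by
  have hz' : ∑ i, B i *ᵥ z' = ∑ i, (B i *ᵥ x i - g i) := by
    rw [← sum_mulVec, h.primal_eq, mulVec_mulVec,
      mul_nonsing_inv _ ((isUnit_iff_isUnit_det _).1 hB), one_mulVec]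
  calc ∑ i, lam' i = ∑ i, (B i *ᵥ x i - g i) - ∑ i, B i *ᵥ z' := by
        rw [← sum_sub_distrib]
        exact sum_congr rfl fun i _ => by rw [h.dual_eq, mulVec_sub]; abel
    _ = 0 := by rw [hz', sub_self]

lemma mulVec_primal_sub_dual (h : IsAladinUpdate B z lam x g z' lam') (i : ι) (w μ : κ → ℝ) :
    B i *ᵥ (z - w) - (lam i - μ) = B i *ᵥ (x i - w) + (g i + μ) := by
  simp only [h.grad_eq, mulVec_sub]
  abel

lemma mulVec_primal_add_dual (h : IsAladinUpdate B z lam x g z' lam') (i : ι) (w μ : κ → ℝ) :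
    B i *ᵥ (z' - w) + (lam' i - μ) = B i *ᵥ (x i - w) - (g i + μ) := by
  simp only [h.dual_eq, mulVec_sub]
  abel

theorem energy_add_eq (h : IsAladinUpdate B z lam x g z' lam') (hB : ∀ i, (B i).IsSymm)
    (hBu : ∀ i, IsUnit (B i)) (hlam : ∑ i, lam i = ∑ i, lamstar i)
    (hlam' : ∑ i, lam' i = ∑ i, lamstar i) :
    aladinEnergy B zstar lamstar z' lam' + 4 * ∑ i, (x i - zstar) ⬝ᵥ (g i + lamstar i) =
      aladinEnergy B zstar lamstar z lam := by
  have hagent : ∀ i,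
      ((lam' i - lamstar i) ⬝ᵥ (B i)⁻¹ *ᵥ (lam' i - lamstar i)
          + (z' - zstar) ⬝ᵥ B i *ᵥ (z' - zstar))
        + 2 * ((z' - zstar) ⬝ᵥ (lam' i - lamstar i))
        + 4 * ((x i - zstar) ⬝ᵥ (g i + lamstar i)) =
      ((lam i - lamstar i) ⬝ᵥ (B i)⁻¹ *ᵥ (lam i - lamstar i)
          + (z - zstar) ⬝ᵥ B i *ᵥ (z - zstar))
        - 2 * ((z - zstar) ⬝ᵥ (lam i - lamstar i)) := by
    intro i
    rw [← dotProduct_inv_mulVec_mulVec_add_self (hB i) (hBu i), h.mulVec_primal_add_dual,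
      ← dotProduct_inv_mulVec_mulVec_sub_self (hB i) (hBu i), h.mulVec_primal_sub_dual,
      dotProduct_inv_mulVec_mulVec_add_self (hB i) (hBu i),
      dotProduct_inv_mulVec_mulVec_sub_self (hB i) (hBu i)]
    ring
  have hcross : ∀ (w : κ → ℝ) (μ : ι → κ → ℝ), ∑ i, μ i = ∑ i, lamstar i →
      ∑ i, w ⬝ᵥ (μ i - lamstar i) = 0 := fun w μ hμ => by
    rw [← dotProduct_sum, sum_sub_distrib, hμ, sub_self, dotProduct_zero]
  have hsum := Fintype.sum_congr _ _ hagent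
  rw [sum_add_distrib, sum_add_distrib, sum_sub_distrib] at hsum
  simpa only [← mul_sum, hcross _ _ hlam, hcross _ _ hlam', mul_zero, add_zero, sub_zero,
    aladinEnergy] using hsum

theorem energy_add_le {m : ℝ} {f : ι → (κ → ℝ) → ℝ} (h : IsAladinUpdate B z lam x g z' lam')
    (hB : ∀ i, (B i).IsSymm) (hBu : ∀ i, IsUnit (B i)) (hlam : ∑ i, lam i = ∑ i, lamstar i)
    (hlam' : ∑ i, lam' i = ∑ i, lamstar i)
    (hx : ∀ i, IsStrongSubgradientAt m (f i) (g i) (x i))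
    (hzstar : ∀ i, IsStrongSubgradientAt m (f i) (-lamstar i) zstar) :
    aladinEnergy B zstar lamstar z' lam' + 4 * m * ∑ i, (x i - zstar) ⬝ᵥ (x i - zstar) ≤
      aladinEnergy B zstar lamstar z lam := by
  rw [← h.energy_add_eq hB hBu hlam hlam', mul_assoc, mul_sum]
  gcongr with i
  simpa only [sub_neg_eq_add] using (hx i).mul_dotProduct_self_le (hzstar i)

end IsAladinUpdate

lemma tendsto_of_aladinEnergy_le_geometric [Nonempty ι] {z : ℕ → κ → ℝ} {lam : ℕ → ι → κ → ℝ}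
    {c C : ℝ} (hB : ∀ i, (B i).PosDef) (hc₀ : 0 ≤ c) (hc₁ : c < 1)
    (hL : ∀ k, aladinEnergy B zstar lamstar (z k) (lam k) ≤ c ^ k * C) :
    Filter.Tendsto z Filter.atTop (nhds zstar) := by
  obtain ⟨i⟩ := ‹Nonempty ι›
  have hnonneg : ∀ j k, 0 ≤ (z k - zstar) ⬝ᵥ B j *ᵥ (z k - zstar) := fun j k => by
    simpa only [star_trivial] using (hB j).posSemidef.dotProduct_mulVec_nonneg (z k - zstar)
  have hbound : ∀ k, (z k - zstar) ⬝ᵥ B i *ᵥ (z k - zstar) ≤ c ^ k * C := fun k =>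
    calc (z k - zstar) ⬝ᵥ B i *ᵥ (z k - zstar)
        ≤ ∑ j, (z k - zstar) ⬝ᵥ B j *ᵥ (z k - zstar) :=
          single_le_sum (fun j _ => hnonneg j k) (mem_univ i)
      _ ≤ aladinEnergy B zstar lamstar (z k) (lam k) :=
          sum_dotProduct_mulVec_le_aladinEnergy fun j => (hB j).posSemidef
      _ ≤ c ^ k * C := hL k
  have hgeom : Filter.Tendsto (fun k => c ^ k * C) Filter.atTop (nhds 0) := by
    simpa only [zero_mul] using (tendsto_pow_atTop_nhds_zero_of_lt_one hc₀ hc₁).mul_const C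
  exact tendsto_sub_nhds_zero_iff.1 <|
    tendsto_zero_of_tendsto_dotProduct_mulVec (hB i) (squeeze_zero (hnonneg i) hbound hgeom)

theorem stmt_3_general [Nonempty ι] {m δ : ℝ} {f : ι → (κ → ℝ) → ℝ} {z : ℕ → κ → ℝ}
    {lam x g : ℕ → ι → κ → ℝ} (hf : ∀ i w, ∃ p, IsStrongSubgradientAt m (f i) p w)
    (hB : ∀ i, (B i).PosDef)
    (hzstar : ∀ i, IsStrongSubgradientAt m (f i) (-lamstar i) zstar)
    (hlamstar : ∑ i, lamstar i = 0) (hlam₀ : ∑ i, lam 0 i = 0)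
    (hx : ∀ k i w, f i (x (k + 1) i) + lam k i ⬝ᵥ x (k + 1) i
          + (1 / 2 : ℝ) * ((x (k + 1) i - z k) ⬝ᵥ B i *ᵥ (x (k + 1) i - z k))
        ≤ f i w + lam k i ⬝ᵥ w + (1 / 2 : ℝ) * ((w - z k) ⬝ᵥ B i *ᵥ (w - z k)))
    (hupdate : ∀ k, IsAladinUpdate B (z k) (lam k) (x (k + 1)) (g k) (z (k + 1)) (lam (k + 1)))
    (hδ : 0 < δ)
    (hδL : ∀ k, δ * aladinEnergy B zstar lamstar (z (k + 1)) (lam (k + 1)) ≤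
      4 * m * ∑ i, (x (k + 1) i - zstar) ⬝ᵥ (x (k + 1) i - zstar)) :
    (∀ k, ∑ i, (z k - zstar) ⬝ᵥ B i *ᵥ (z k - zstar) ≤ aladinEnergy B zstar lamstar (z k) (lam k)
        ∧ aladinEnergy B zstar lamstar (z k) (lam k) ≤
          (1 / (1 + δ)) ^ k * aladinEnergy B zstar lamstar (z 0) (lam 0))
      ∧ Filter.Tendsto z Filter.atTop (nhds zstar) := by
  have hsymm : ∀ i, (B i).IsSymm := fun i => isHermitian_iff_isSymm.1 (hB i).isHermitian
  have hdual : ∀ k, ∑ i, lam k i = ∑ i, lamstar i := by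
    rintro (_ | k)
    · rw [hlam₀, hlamstar]
    · rw [(hupdate k).sum_dual_eq_zero (posDef_sum univ_nonempty fun i _ => hB i).isUnit, hlamstar]
  have hsubgrad : ∀ k i, IsStrongSubgradientAt m (f i) (g k i) (x (k + 1) i) := fun k i =>
    (hupdate k).grad_eq i ▸ isStrongSubgradientAt_of_forall_prox_le (hf i) (hsymm i) (hx k i)
  have hcontract : ∀ k, aladinEnergy B zstar lamstar (z (k + 1)) (lam (k + 1)) ≤
      1 / (1 + δ) * aladinEnergy B zstar lamstar (z k) (lam k) := fun k => by
    have hdescent := (hupdate k).energy_add_le hsymm (fun i => (hB i).isUnit) (hdual k)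
      (hdual (k + 1)) (hsubgrad k) hzstar
    rw [one_div_mul_eq_div, le_div_iff₀ (by positivity)]
    linarith [hδL k]
  have hgeom : ∀ k, aladinEnergy B zstar lamstar (z k) (lam k) ≤
      (1 / (1 + δ)) ^ k * aladinEnergy B zstar lamstar (z 0) (lam 0) := fun k =>
    le_geom (u := fun k => aladinEnergy B zstar lamstar (z k) (lam k)) (by positivity) k
      fun j _ => hcontract j
  have hrate : 1 / (1 + δ) < 1 := by
    rw [div_lt_one (by positivity)]
    linarith
  exact ⟨fun k => ⟨sum_dotProduct_mulVec_le_aladinEnergy fun i => (hB i).posSemidef, hgeom k⟩,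
    tendsto_of_aladinEnergy_le_geometric hB (by positivity) hrate hgeom⟩

end Aladin

/-- Iterating the Consensus ALADIN step with constant matrices, with each
`fᵢ` differentiable and `m`-strongly convex (`m > 0`), `(z*, λ*)` a KKT point, and
`Σᵢ λᵢ⁰ = 0`: if `δ > 0` satisfies `δ · L(z^{k+1}, λ^{k+1}) ≤ 4m Σᵢ ‖xᵢ^{k+1} − z*‖²` for
every `k`, then for all `k`,
`Σᵢ ‖z^k − z*‖²_{Bᵢ} ≤ L(z^k, λ^k) ≤ (1/(1+δ))^k · L(z⁰, λ⁰)`;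
in particular `z^k → z*` (at a linear rate). -/
theorem stmt_3 {n N : ℕ} (hN : 0 < N) (m : ℝ) (hm : 0 < m)
    (f : Fin N → (Fin n → ℝ) → ℝ)
    (gradf : Fin N → (Fin n → ℝ) → (Fin n → ℝ))
    (hdiff : ∀ i, Differentiable ℝ (f i))
    (hgrad : ∀ i x y, fderiv ℝ (f i) x y = gradf i x ⬝ᵥ y)
    -- m-strong convexity: f(y) ≥ f(x) + ∇f(x)ᵀ(y − x) + (m/2)‖y − x‖²
    (hsc : ∀ i x y, f i x + gradf i x ⬝ᵥ (y - x) + m / 2 * ((y - x) ⬝ᵥ (y - x)) ≤ f i y)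
    (B : Fin N → Matrix (Fin n) (Fin n) ℝ)
    (hB : ∀ i, (B i).PosDef)
    -- KKT point (z*, λ*)
    (zstar : Fin n → ℝ) (lamstar : Fin N → Fin n → ℝ)
    (hKKT1 : ∀ i, gradf i zstar + lamstar i = 0)
    (hKKT2 : ∑ i, lamstar i = 0)
    -- energy function
    (L : (Fin n → ℝ) → (Fin N → Fin n → ℝ) → ℝ)
    (hL : ∀ w μ, L w μ = ∑ i, ((μ i - lamstar i) ⬝ᵥ ((B i)⁻¹ *ᵥ (μ i - lamstar i))
        + (w - zstar) ⬝ᵥ ((B i) *ᵥ (w - zstar))))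
    -- the sequences (z^k, λ^k) and local minimizers x^{k+1}
    (z : ℕ → Fin n → ℝ) (lam : ℕ → Fin N → Fin n → ℝ) (x : ℕ → Fin N → Fin n → ℝ)
    (g : ℕ → Fin N → Fin n → ℝ)
    (hlam0 : ∑ i, lam 0 i = 0)
    -- x_i^{k+1} is the global minimizer of the local subproblem at (z^k, λ^k)
    (hx : ∀ k i w, f i (x (k + 1) i) + lam k i ⬝ᵥ x (k + 1) i
          + (1 / 2 : ℝ) * ((x (k + 1) i - z k) ⬝ᵥ ((B i) *ᵥ (x (k + 1) i - z k)))
        ≤ f i w + lam k i ⬝ᵥ w + (1 / 2 : ℝ) * ((w - z k) ⬝ᵥ ((B i) *ᵥ (w - z k))))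
    -- gradient recovery, global update and dual update
    (hg : ∀ k i, g k i = (B i) *ᵥ (z k - x (k + 1) i) - lam k i)
    (hz : ∀ k, z (k + 1) = (∑ i, B i)⁻¹ *ᵥ (∑ i, ((B i) *ᵥ x (k + 1) i - g k i)))
    (hlamrec : ∀ k i, lam (k + 1) i = (B i) *ᵥ (x (k + 1) i - z (k + 1)) - g k i)
    -- the contraction parameter δ
    (δ : ℝ) (hδ : 0 < δ)
    (hδL : ∀ k, δ * L (z (k + 1)) (lam (k + 1))
        ≤ 4 * m * ∑ i, ((x (k + 1) i - zstar) ⬝ᵥ (x (k + 1) i - zstar))) :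
    (∀ k, (∑ i, (z k - zstar) ⬝ᵥ ((B i) *ᵥ (z k - zstar))) ≤ L (z k) (lam k)
        ∧ L (z k) (lam k) ≤ (1 / (1 + δ)) ^ k * L (z 0) (lam 0))
    ∧ Filter.Tendsto z Filter.atTop (nhds zstar) := by
  obtain rfl : L = aladinEnergy B zstar lamstar := funext₂ hL
  have : Nonempty (Fin N) := ⟨⟨0, hN⟩⟩
  exact stmt_3_general (fun i w => ⟨gradf i w, hsc i w⟩) hB
    (fun i => eq_neg_of_add_eq_zero_left (hKKT1 i) ▸ hsc i zstar) hKKT2 hlam0 hx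
    (fun k => ⟨hg k, hz k, hlamrec k⟩) hδ hδL
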